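/- Let Q_T : Ω → (S×A → ℝ) be a random function and π : Ω → (S → A) a random policy such that π(ω) is a greedy policy for Q_T(ω) for almost every ω. If 𝔼[‖Q_T − Q*‖_∞] ≤ ε, then 𝔼[‖Q^{π} − Q*‖_∞] ≤ 2γε/(1−γ), where Q^{π}(ω) := Q^{π(ω)}. -/

import Mathlib

open MeasureTheory ProbabilityTheory Finset

/-- sup norm of a real function on a finite nonempty type. -/
noncomputable def supNorm {ι : Type*} [Fintype ι] [Nonempty ι] (f : ι → ℝ) : ℝ :=
  Finset.univ.sup' Finset.univ_nonempty (fun i => |f i|)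

/-- squared Euclidean norm of a real function on a finite type. -/
def sqNorm {ι : Type*} [Fintype ι] (f : ι → ℝ) : ℝ := ∑ i, (f i) ^ 2

/-- Bellman optimality operator. -/
noncomputable def bellman {S A : Type*} [Fintype S] [Fintype A] [Nonempty A]
    (P : S → A → S → ℝ) (r : S → A → ℝ) (γ : ℝ) (Q : S × A → ℝ) : S × A → ℝ :=
  fun x => r x.1 x.2 + γ * ∑ s' : S, P x.1 x.2 s' *
    Finset.univ.sup' Finset.univ_nonempty (fun a' => Q (s', a'))


/-- Bellman operator of a deterministic policy. -/
noncomputable def bellmanPi {S A : Type*} [Fintype S]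
    (P : S → A → S → ℝ) (r : S → A → ℝ) (γ : ℝ) (π : S → A) (Q : S × A → ℝ) : S × A → ℝ :=
  fun x => r x.1 x.2 + γ * ∑ s' : S, P x.1 x.2 s' * Q (s', π s')

/-- A greedy policy for a Q-function. -/
def IsGreedy {S A : Type*} [Fintype A] [Nonempty A] (Q : S × A → ℝ) (π : S → A) : Prop :=
  ∀ s, Q (s, π s) = Finset.univ.sup' Finset.univ_nonempty (fun a => Q (s, a))

theorem abs_le_supNorm_aux {ι : Type*} [Fintype ι] [Nonempty ι] (f : ι → ℝ) (i : ι) :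
    |f i| ≤ supNorm f :=
  Finset.le_sup' (fun i => |f i|) (Finset.mem_univ i)

theorem greedy_pointwise_aux
    {S A : Type*} [Fintype S] [Fintype A] [Nonempty S] [Nonempty A]
    (P : S → A → S → ℝ) (hP0 : ∀ s a s', 0 ≤ P s a s') (hP1 : ∀ s a, ∑ s', P s a s' = 1)
    (r : S → A → ℝ) (γ : ℝ) (hγ : γ ∈ Set.Ioo (0 : ℝ) 1)
    (Qstar : S × A → ℝ) (hQstar : bellman P r γ Qstar = Qstar)
    (q : S × A → ℝ) (p : S → A) (hq : bellmanPi P r γ p q = q)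
    (Q : S × A → ℝ) (hp : IsGreedy Q p) :
    supNorm (fun x => q x - Qstar x) ≤
      2 * γ / (1 - γ) * supNorm (fun x => Q x - Qstar x) := by
  obtain ⟨h0, h1⟩ := hγ
  have hD := abs_le_supNorm_aux (fun x => q x - Qstar x)
  have hd := abs_le_supNorm_aux (fun x => Q x - Qstar x)
  set D := supNorm (fun x => q x - Qstar x) with hDdef
  set d := supNorm (fun x => Q x - Qstar x)
  have key : ∀ s, |q (s, p s) - Finset.univ.sup' Finset.univ_nonempty
      (fun a' => Qstar (s, a'))| ≤ D + 2 * d := by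
    intro s
    have e1 : Qstar (s, p s) ≤ Finset.univ.sup' Finset.univ_nonempty
        (fun a' => Qstar (s, a')) :=
      Finset.le_sup' (fun a' => Qstar (s, a')) (Finset.mem_univ (p s))
    have e2 : Finset.univ.sup' Finset.univ_nonempty
        (fun a' => Qstar (s, a')) ≤ Qstar (s, p s) + 2 * d := by
      apply Finset.sup'_le
      intro a _
      have g : Q (s, a) ≤ Q (s, p s) := by
        rw [hp s]
        exact Finset.le_sup' (fun a' => Q (s, a')) (Finset.mem_univ a)
      have u := abs_le.1 (hd (s, a))
      have v := abs_le.1 (hd (s, p s))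
      linarith [u.1, v.2]
    have w := abs_le.1 (hD (s, p s))
    have d0 : 0 ≤ d := (abs_nonneg _).trans (hd (s, p s))
    rw [abs_le]
    constructor <;> linarith [w.1, w.2]
  have hmain : D ≤ γ * (D + 2 * d) := by
    conv_lhs => rw [hDdef]
    apply Finset.sup'_le
    intro x _
    have e : q x - Qstar x = γ * ∑ s', P x.1 x.2 s' *
        (q (s', p s') - Finset.univ.sup' Finset.univ_nonempty (fun a' => Qstar (s', a'))) := by
      conv_lhs => rw [← hq, ← hQstar]
      simp only [bellman, bellmanPi, mul_sub, Finset.sum_sub_distrib]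
      ring
    dsimp only
    rw [e, abs_mul, abs_of_pos h0]
    refine mul_le_mul_of_nonneg_left ?_ h0.le
    calc _ ≤ ∑ s', |P x.1 x.2 s' * (q (s', p s') -
            Finset.univ.sup' Finset.univ_nonempty (fun a' => Qstar (s', a')))| :=
          Finset.abs_sum_le_sum_abs _ _
      _ ≤ ∑ s', P x.1 x.2 s' * (D + 2 * d) := by
          apply Finset.sum_le_sum
          intro s' _
          rw [abs_mul, abs_of_nonneg (hP0 _ _ _)]
          exact mul_le_mul_of_nonneg_left (key s') (hP0 _ _ _)
      _ = D + 2 * d := by rw [← Finset.sum_mul, hP1, one_mul]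
  rw [div_mul_eq_mul_div, le_div_iff₀ (by linarith)]
  linarith

theorem greedy_policy_qvalue_error
    {S A : Type*} [Fintype S] [Fintype A] [Nonempty S] [Nonempty A]
    {Ω : Type*} [MeasurableSpace Ω] (μ : Measure Ω) [IsProbabilityMeasure μ]
    (P : S → A → S → ℝ) (hP0 : ∀ s a s', 0 ≤ P s a s') (hP1 : ∀ s a, ∑ s', P s a s' = 1)
    (r : S → A → ℝ) (hr : ∀ s a, |r s a| ≤ 1)
    (γ : ℝ) (hγ : γ ∈ Set.Ioo (0 : ℝ) 1)
    (Qstar : S × A → ℝ) (hQstar : bellman P r γ Qstar = Qstar)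
    (Qpi : (S → A) → S × A → ℝ) (hQpi : ∀ π, bellmanPi P r γ π (Qpi π) = Qpi π)
    (QT : Ω → S × A → ℝ) (π : Ω → S → A)
    (hπ : ∀ᵐ ω ∂μ, IsGreedy (QT ω) (π ω))
    (ε : ℝ)
    (hQTint : Integrable (fun ω => supNorm (fun x => QT ω x - Qstar x)) μ)
    (hQT : ∫ ω, supNorm (fun x => QT ω x - Qstar x) ∂μ ≤ ε)
    (hQpiint : Integrable (fun ω => supNorm (fun x => Qpi (π ω) x - Qstar x)) μ) :
    ∫ ω, supNorm (fun x => Qpi (π ω) x - Qstar x) ∂μ ≤ 2 * γ * ε / (1 - γ) := by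
  have h1 : 0 < 1 - γ := by linarith [hγ.2]
  have h0 : 0 ≤ 2 * γ / (1 - γ) := div_nonneg (by linarith [hγ.1]) h1.le
  calc _ ≤ ∫ ω, 2 * γ / (1 - γ) * supNorm (fun x => QT ω x - Qstar x) ∂μ := by
        apply integral_mono_ae hQpiint (hQTint.const_mul _)
        filter_upwards [hπ] with ω hω
        exact greedy_pointwise_aux P hP0 hP1 r γ hγ Qstar hQstar _ _ (hQpi _) _ hω
    _ = 2 * γ / (1 - γ) * ∫ ω, supNorm (fun x => QT ω x - Qstar x) ∂μ :=
        integral_const_mul _ _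
    _ ≤ 2 * γ / (1 - γ) * ε := mul_le_mul_of_nonneg_left hQT h0
    _ = 2 * γ * ε / (1 - γ) := by ring
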